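/- (Herbrand's theorem, semantic form.) Let L be a first-order language possessing at least one closed term, and let T be a set of universal L-sentences. If φ(v) is a quantifier-free L-formula with at most one free variable v and every (nonempty) model of T satisfies ∃v φ(v), then there exist finitely many closed L-terms t₁,…,tₙ such that every (nonempty) model of T satisfies φ(t₁) ∨ … ∨ φ(tₙ). -/

import Mathlib

open FirstOrder FirstOrder.Language

universe u v

/-- Substitution of a closed term `t` for the single variable of a formula `φ(v)` (with the
variable realised as the unique bounded variable of `φ`), producing the sentence `φ(t)`. -/
def substClosedTerm {L : FirstOrder.Language.{u, v}} (φ : L.BoundedFormula Empty 1)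
    (t : L.Term Empty) : L.Sentence :=
  φ.toFormula.subst (Sum.elim (fun e => Empty.elim e) fun _ => t)

/-!
The submodel `⊥` of a model `M` of a universal theory `T` consists of the values of the closed
terms, and it is again a model of `T`, so it contains a witness of `∃ v, φ(v)`. That witness is the
value of a closed term `t`, and `φ(t)` passes from `⊥` up to `M`. Hence every model of `T` satisfies
`φ(t)` for some closed term `t`, and by compactness finitely many closed terms suffice.
-/

section ClosedTerms

variable {L : FirstOrder.Language.{u, v}} {M : Type*} [L.Structure M]

theorem mem_bot_substructure_iff_exists_closedTerm {x : M} :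
    x ∈ (⊥ : L.Substructure M) ↔ ∃ t : L.Term Empty, t.realize default = x := by
  constructor
  · intro hx
    rw [← Substructure.closure_empty, Substructure.mem_closure_iff_exists_term] at hx
    obtain ⟨t, rfl⟩ := hx
    refine ⟨t.relabel isEmptyElim, ?_⟩
    rw [Term.realize_relabel, Subsingleton.elim (_ ∘ _) Subtype.val]
  · rintro ⟨t, rfl⟩
    exact t.realize_mem _ isEmptyElim

instance nonempty_bot_substructure [Nonempty (L.Term Empty)] :
    Nonempty (⊥ : L.Substructure M) :=
  ‹Nonempty (L.Term Empty)›.map fun t =>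
    ⟨t.realize default, mem_bot_substructure_iff_exists_closedTerm.2 ⟨t, rfl⟩⟩

theorem realize_substClosedTerm {φ : L.BoundedFormula Empty 1} {t : L.Term Empty} :
    M ⊨ substClosedTerm φ t ↔ φ.Realize default fun _ => (t.realize default : M) := by
  rw [Sentence.Realize, Formula.Realize, substClosedTerm, BoundedFormula.realize_subst]
  refine (BoundedFormula.realize_toFormula φ _).trans (iff_of_eq ?_)
  congr!

theorem exists_realize_substClosedTerm_of_bot_realize_ex {φ : L.BoundedFormula Empty 1}
    (hφ : φ.IsExistential) (h : (⊥ : L.Substructure M) ⊨ φ.ex) :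
    ∃ t : L.Term Empty, M ⊨ substClosedTerm φ t := by
  obtain ⟨a, ha⟩ := BoundedFormula.realize_ex.1 h
  obtain ⟨t, ht⟩ := mem_bot_substructure_iff_exists_closedTerm.1 a.2
  refine ⟨t, realize_substClosedTerm.2 ?_⟩
  convert hφ.realize_embedding (Substructure.subtype ⊥) ha using 1
  funext i
  rw [Function.comp_apply, Subsingleton.elim i (Fin.last 0), Fin.snoc_last]
  exact ht

theorem exists_realize_substClosedTerm_of_models_ex [Nonempty (L.Term Empty)] {T : L.Theory}
    [T.IsUniversal] [M ⊨ T] {φ : L.BoundedFormula Empty 1} (hφ : φ.IsExistential)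
    (h : T ⊨ᵇ φ.ex) : ∃ t : L.Term Empty, M ⊨ substClosedTerm φ t :=
  have : (⊥ : L.Substructure M) ⊨ T := Substructure.models_of_isUniversal ⊥ T
  exists_realize_substClosedTerm_of_bot_realize_ex hφ (h.realize_sentence _)

end ClosedTerms

section Compactness

variable {L : FirstOrder.Language.{u, v}} {T : L.Theory}

theorem models_foldr_sup_iff {l : List L.Sentence} :
    T ⊨ᵇ l.foldr (· ⊔ ·) ⊥ ↔
      ∀ M : Theory.ModelType.{u, v, max u v} T, ∃ σ ∈ l, M ⊨ σ :=
  Theory.models_sentence_iff.trans <|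
    forall_congr' fun _ => BoundedFormula.realize_foldr_sup l default default

theorem exists_finset_forall_model_exists_mem {ι : Type*} {σ : ι → L.Sentence}
    (h : ∀ M : Theory.ModelType.{u, v, max u v} T, ∃ i, M ⊨ σ i) :
    ∃ s : Finset ι, ∀ M : Theory.ModelType.{u, v, max u v} T, ∃ i ∈ s, M ⊨ σ i := by
  let refutes (s : Finset ι) : L.Theory := T ∪ (fun i => (σ i).not) '' s
  have refutes_directed : Directed (· ⊆ ·) refutes :=
    Monotone.directed_le fun _ _ hst =>
      Set.union_subset_union_right T (Set.image_mono (Finset.coe_subset.2 hst))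
  have not_satisfiable : ¬ Theory.IsSatisfiable (⋃ s, refutes s) := by
    rintro ⟨M⟩
    obtain ⟨i, hi⟩ := h (M.subtheoryModel
      (Set.subset_union_left.trans (Set.subset_iUnion refutes ∅)))
    have negation_mem : (σ i).not ∈ ⋃ s, refutes s :=
      Set.mem_iUnion.2 ⟨{i}, Or.inr ⟨i, by simp, rfl⟩⟩
    exact Theory.realize_sentence_of_mem _ negation_mem hi
  rw [Theory.isSatisfiable_directed_union_iff refutes_directed, not_forall] at not_satisfiable
  obtain ⟨s, hs⟩ := not_satisfiable
  refine ⟨s, fun M => ?_⟩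
  by_contra! hM
  have : M ⊨ refutes s := by
    refine Theory.Model.union M.is_model ((Theory.model_iff _).2 ?_)
    rintro _ ⟨i, hi, rfl⟩
    exact hM i hi
  exact hs (Theory.Model.isSatisfiable M)

end Compactness

theorem statement18_general (L : FirstOrder.Language.{u, v}) (T : L.Theory) (hT : T.IsUniversal)
    (hterm : Nonempty (L.Term Empty))
    (φ : L.BoundedFormula Empty 1) (hφ : φ.IsExistential)
    (h : T ⊨ᵇ φ.ex) :
    ∃ ts : List (L.Term Empty), ts ≠ [] ∧
      T ⊨ᵇ (ts.map fun t => substClosedTerm φ t).foldr (· ⊔ ·) ⊥ := by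
  obtain ⟨s, hs⟩ := exists_finset_forall_model_exists_mem (T := T) fun _ =>
    exists_realize_substClosedTerm_of_models_ex hφ h
  obtain ⟨t₀⟩ := hterm
  refine ⟨t₀ :: s.toList, List.cons_ne_nil _ _, models_foldr_sup_iff.2 fun M => ?_⟩
  obtain ⟨t, hts, ht⟩ := hs M
  exact ⟨_, List.mem_map_of_mem (List.mem_cons_of_mem _ (Finset.mem_toList.2 hts)), ht⟩

/-- **Herbrand's theorem, semantic form.**  Let `L` be a first-order
language possessing at least one closed term, and let `T` be a set of universal
`L`-sentences.  If `φ(v)` is a quantifier-free `L`-formula with at most one free variable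
`v`, and every (nonempty) model of `T` satisfies `∃ v, φ(v)`, then there are finitely many
closed `L`-terms `t₁, …, tₙ` (`n ≥ 1`) such that every (nonempty) model of `T` satisfies
`φ(t₁) ∨ ⋯ ∨ φ(tₙ)`. -/
theorem statement18 (L : FirstOrder.Language.{u, v}) (T : L.Theory) (hT : T.IsUniversal)
    (hterm : Nonempty (L.Term Empty))
    (φ : L.BoundedFormula Empty 1) (hφ : φ.IsQF)
    (h : T ⊨ᵇ φ.ex) :
    ∃ ts : List (L.Term Empty), ts ≠ [] ∧
      T ⊨ᵇ (ts.map fun t => substClosedTerm φ t).foldr (· ⊔ ·) ⊥ :=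
  statement18_general L T hT hterm φ hφ.isExistential h
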